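/- Talagrand's transport inequality for the Gaussian measure: for every probability density f with respect to the standard Gaussian γ on ℝⁿ (∫ f dγ = 1), the quadratic Wasserstein distance satisfies W₂(f dγ, dγ) ≤ √(2 Ent_γ(f)). -/

import Mathlib

open MeasureTheory Real

noncomputable def gaussian (n : ℕ) : Measure (EuclideanSpace ℝ (Fin n)) :=
  (volume : Measure (EuclideanSpace ℝ (Fin n))).withDensity
    (fun x => ENNReal.ofReal ((2 * Real.pi) ^ (-(n : ℝ) / 2) * Real.exp (-‖x‖ ^ 2 / 2)))

/-- `π` is a coupling of `μ` and `ν`. -/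
def IsCoupling {n : ℕ} (pl : Measure (EuclideanSpace ℝ (Fin n) × EuclideanSpace ℝ (Fin n)))
    (μ ν : Measure (EuclideanSpace ℝ (Fin n))) : Prop :=
  pl.map Prod.fst = μ ∧ pl.map Prod.snd = ν

/-- Squared quadratic Wasserstein distance. -/
noncomputable def W2sq {n : ℕ} (μ ν : Measure (EuclideanSpace ℝ (Fin n))) : ℝ :=
  sInf { r : ℝ | ∃ pl, IsCoupling pl μ ν ∧ r = ∫ p, ‖p.1 - p.2‖ ^ 2 ∂pl }

/-!
In dimension one, the monotone map `T` transporting `γ` to `ν` satisfies the Monge–Ampère equation.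
Taking logarithms, it expresses the log-density of `ν` at `T u` through `log (T' u)` and
`((T u) ^ 2 - u ^ 2) / 2`. Since `log T' ≤ T' - 1`, and since integration by parts gives
`∫ T' dγ ≤ ∫ u T dγ` (an inequality, because the singular part of the derivative of a monotone
function is nonnegative), the integrated equation bounds `∫ (T u - u) ^ 2 / 2 dγ` by the relative
entropy of `ν`. Dimension `n` follows by induction: relative entropy splits into the entropy of the
first marginal and the mean entropy of the conditional laws, and couplings of the conditional laws
can be glued along a coupling of the first marginals because they are chosen measurably.
-/

open Set Filter Topology ProbabilityTheory InformationTheory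
open scoped ENNReal NNReal

/-! ### Monotone rearrangement -/

section MonotoneRearrangement

lemma continuous_cdf (ν : Measure ℝ) [IsProbabilityMeasure ν] [NullSingletonClass ν] :
    Continuous (cdf ν) := by
  refine continuous_iff_continuousAt.2 fun x => ?_
  have hjump : ν {x} = 0 := measure_singleton x
  rw [← measure_cdf ν, StieltjesFunction.measure_singleton, ENNReal.ofReal_eq_zero] at hjump
  rw [(monotone_cdf ν).continuousAt_iff_leftLim_eq_rightLim, StieltjesFunction.rightLim_eq]
  exact le_antisymm ((monotone_cdf ν).leftLim_le le_rfl) (by linarith)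

variable (μ ν : Measure ℝ)

lemma strictMono_cdf [IsProbabilityMeasure μ] [μ.IsOpenPosMeasure] : StrictMono (cdf μ) := by
  intro a b hab
  have hpos : 0 < μ (Ioc a b) :=
    (isOpen_Ioo.measure_pos _ (nonempty_Ioo.2 hab)).trans_le (measure_mono Ioo_subset_Ioc_self)
  rw [← measure_cdf μ, StieltjesFunction.measure_Ioc, ENNReal.ofReal_pos] at hpos
  linarith

lemma cdf_pos [IsProbabilityMeasure μ] [μ.IsOpenPosMeasure] (u : ℝ) : 0 < cdf μ u :=
  (cdf_nonneg μ (u - 1)).trans_lt (strictMono_cdf μ (sub_one_lt u))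

lemma cdf_lt_one [IsProbabilityMeasure μ] [μ.IsOpenPosMeasure] (u : ℝ) : cdf μ u < 1 :=
  (strictMono_cdf μ (lt_add_one u)).trans_le (cdf_le_one μ _)

lemma measure_setOf_cdf_le [IsProbabilityMeasure μ] [μ.IsOpenPosMeasure] [NullSingletonClass μ]
    {p : ℝ} (hp₀ : 0 ≤ p) (hp₁ : p ≤ 1) : μ {u | cdf μ u ≤ p} = ENNReal.ofReal p := by
  rcases hp₀.eq_or_lt with rfl | hp₀
  · simp [(cdf_pos μ _).not_ge]
  rcases hp₁.eq_or_lt with rfl | hp₁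
  · simp [cdf_le_one]
  obtain ⟨s, rfl⟩ := mem_range_of_exists_le_of_exists_ge (continuous_cdf μ)
    ((tendsto_cdf_atBot μ).eventually_le_const hp₀).exists
    ((tendsto_cdf_atTop μ).eventually_const_le hp₁).exists
  simp only [(strictMono_cdf μ).le_iff_le]
  exact (ofReal_cdf μ s).symm

/-- The monotone map `G⁻¹ ∘ F` transporting `μ` to `ν`, where `F` and `G` are the cumulative
distribution functions of `μ` and `ν` and `G⁻¹` is the left-continuous generalized inverse of `G`.
The infimum has its junk value `0` where `F` vanishes or exceeds all values of `G`. -/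
noncomputable def monotoneRearrangement (u : ℝ) : ℝ :=
  sInf {t | cdf μ u ≤ cdf ν t}

section OpenPos

variable [IsProbabilityMeasure μ] [μ.IsOpenPosMeasure]

lemma monotoneRearrangement_le_iff {u t : ℝ} :
    monotoneRearrangement μ ν u ≤ t ↔ cdf μ u ≤ cdf ν t := by
  have hne : {t | cdf μ u ≤ cdf ν t}.Nonempty :=
    ((tendsto_cdf_atTop ν).eventually_const_le (cdf_lt_one μ u)).exists
  have hbdd : BddBelow {t | cdf μ u ≤ cdf ν t} := by
    obtain ⟨b, hb⟩ := ((tendsto_cdf_atBot ν).eventually_lt_const (cdf_pos μ u)).exists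
    exact ⟨b, fun t ht => le_of_not_gt fun htb =>
      (hb.trans_le ht).not_ge (monotone_cdf ν htb.le)⟩
  refine ⟨fun h => ?_, fun h => csInf_le hbdd h⟩
  have hright : Tendsto (cdf ν) (𝓝[>] t) (𝓝 (cdf ν t)) :=
    ((cdf ν).right_continuous t).mono Ioi_subset_Ici_self
  refine ge_of_tendsto hright (eventually_nhdsWithin_of_forall fun s hts => ?_)
  obtain ⟨r, hr, hrs⟩ := exists_lt_of_csInf_lt hne (h.trans_lt hts)
  exact hr.trans (monotone_cdf ν hrs.le)

lemma monotone_monotoneRearrangement : Monotone (monotoneRearrangement μ ν) := fun _ _ huv =>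
  (monotoneRearrangement_le_iff μ ν).2
    ((monotone_cdf μ huv).trans ((monotoneRearrangement_le_iff μ ν).1 le_rfl))

lemma cdf_monotoneRearrangement [IsProbabilityMeasure ν] [NullSingletonClass ν] (u : ℝ) :
    cdf ν (monotoneRearrangement μ ν u) = cdf μ u := by
  refine le_antisymm ?_ ((monotoneRearrangement_le_iff μ ν).1 le_rfl)
  have hleft : Tendsto (cdf ν) (𝓝[<] monotoneRearrangement μ ν u)
      (𝓝 (cdf ν (monotoneRearrangement μ ν u))) :=
    (continuous_cdf ν).continuousAt.continuousWithinAt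
  refine le_of_tendsto hleft (eventually_nhdsWithin_of_forall fun t ht => le_of_not_ge fun h => ?_)
  exact ((monotoneRearrangement_le_iff μ ν).2 h).not_gt ht

lemma measurePreserving_monotoneRearrangement [NullSingletonClass μ] [IsProbabilityMeasure ν] :
    MeasurePreserving (monotoneRearrangement μ ν) μ ν := by
  have hm : Measurable (monotoneRearrangement μ ν) :=
    (monotone_monotoneRearrangement μ ν).measurable
  have := Measure.isProbabilityMeasure_map (μ := μ) hm.aemeasurable
  refine ⟨hm, Measure.ext_of_Iic _ _ fun t => ?_⟩
  have hpre : monotoneRearrangement μ ν ⁻¹' Iic t = {u | cdf μ u ≤ cdf ν t} :=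
    Set.ext fun _ => monotoneRearrangement_le_iff μ ν
  rw [Measure.map_apply hm measurableSet_Iic, hpre,
    measure_setOf_cdf_le μ (cdf_nonneg ν t) (cdf_le_one ν t), ofReal_cdf]

lemma measurable_uncurry_monotoneRearrangement :
    Measurable fun p : ProbabilityMeasure ℝ × ℝ => monotoneRearrangement μ p.1 p.2 := by
  refine measurable_of_Iic fun t => ?_
  have hpre : (fun p : ProbabilityMeasure ℝ × ℝ => monotoneRearrangement μ p.1 p.2) ⁻¹' Iic t
      = {p | cdf μ p.2 ≤ ((p.1 : Measure ℝ) (Iic t)).toReal} := by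
    ext p
    rw [mem_preimage, mem_Iic, monotoneRearrangement_le_iff, cdf_eq_real (p.1 : Measure ℝ)]
    rfl
  rw [hpre]
  exact measurableSet_le ((monotone_cdf μ).measurable.comp measurable_snd)
    (((Measure.measurable_coe measurableSet_Iic).comp
      (measurable_subtype_coe.comp measurable_fst)).ennreal_toReal)

lemma ae_hasDerivAt_cdf [IsProbabilityMeasure ν] :
    ∀ᵐ x, HasDerivAt (cdf ν) (ν.rnDeriv volume x).toReal x := by
  simpa only [measure_cdf] using (cdf ν).ae_hasDerivAt

-- Differentiate `G (T u) = F u`, with `F` and `G` the cumulative distribution functions.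
lemma rnDeriv_monotoneRearrangement_mul_deriv [IsProbabilityMeasure ν] (hμ : μ ≪ volume)
    (hν : ν ≪ volume) :
    ∀ᵐ u ∂μ, (ν.rnDeriv volume (monotoneRearrangement μ ν u)).toReal
      * deriv (monotoneRearrangement μ ν) u = (μ.rnDeriv volume u).toReal := by
  have : NullSingletonClass μ := ⟨fun x => hμ (measure_singleton x)⟩
  have : NullSingletonClass ν := ⟨fun x => hν (measure_singleton x)⟩
  have hpres := measurePreserving_monotoneRearrangement μ ν
  have hmono := monotone_monotoneRearrangement μ ν
  filter_upwards [hpres.quasiMeasurePreserving.ae (hν.ae_le (ae_hasDerivAt_cdf ν)),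
    hμ.ae_le (ae_hasDerivAt_cdf μ), hμ.ae_le hmono.ae_differentiableAt] with u hG hF hT
  refine (hG.comp u hT.hasDerivAt).unique ?_
  rwa [show cdf ν ∘ monotoneRearrangement μ ν = cdf μ from
    funext (cdf_monotoneRearrangement μ ν)]

/- Taking logarithms in the Monge–Ampère equation `g (T u) * T' u = f u` and using
`log T' ≤ T' - 1` linearizes it in `T'`. -/
lemma llr_sub_llr_sub_deriv_le_llr_monotoneRearrangement [IsProbabilityMeasure ν]
    (hμ : μ ≪ volume) (hν : ν ≪ μ) :
    ∀ᵐ u ∂μ, llr μ volume u - llr μ volume (monotoneRearrangement μ ν u)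
      - deriv (monotoneRearrangement μ ν) u + 1 ≤ llr ν μ (monotoneRearrangement μ ν u) := by
  have : NullSingletonClass μ := ⟨fun x => hμ (measure_singleton x)⟩
  have hpres := (measurePreserving_monotoneRearrangement μ ν).quasiMeasurePreserving
  filter_upwards [rnDeriv_monotoneRearrangement_mul_deriv μ ν hμ (hν.trans hμ),
    hpres.ae ((hν.trans hμ).ae_le (Measure.rnDeriv_mul_rnDeriv (κ := volume) hν)),
    Measure.rnDeriv_pos hμ, hμ.ae_le (Measure.rnDeriv_ne_top μ volume)] with u hMA hchain hpos hfin
  rw [← hchain, Pi.mul_apply, ENNReal.toReal_mul] at hMA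
  have hne := (ENNReal.toReal_pos hpos.ne' hfin).ne'
  rw [← hMA] at hne
  obtain ⟨⟨hratio, hdens⟩, hderiv⟩ : (_ ≠ _ ∧ _ ≠ _) ∧ _ ≠ _ := by
    simpa only [ne_eq, mul_eq_zero, not_or] using hne
  have hlog : llr μ volume u = llr ν μ (monotoneRearrangement μ ν u)
      + llr μ volume (monotoneRearrangement μ ν u)
      + log (deriv (monotoneRearrangement μ ν) u) := by
    simp only [llr]
    rw [← hMA, log_mul (mul_ne_zero hratio hdens) hderiv, log_mul hratio hdens]
  have hderiv_nonneg := (monotone_monotoneRearrangement μ ν).deriv_nonneg (x := u)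
  linarith [log_le_sub_one_of_pos (hderiv_nonneg.lt_of_ne' hderiv)]

end OpenPos

end MonotoneRearrangement

/-! ### Gaussian integration by parts -/

section GaussianReal

lemma log_gaussianPDFReal (m : ℝ) {v : ℝ≥0} (hv : v ≠ 0) (x : ℝ) :
    log (gaussianPDFReal m v x) = log (√(2 * π * v))⁻¹ - (x - m) ^ 2 / (2 * v) := by
  rw [gaussianPDFReal, log_mul (by positivity) (exp_pos _).ne', log_exp, neg_div, ← sub_eq_add_neg]

lemma llr_gaussianReal_volume (m : ℝ) {v : ℝ≥0} (hv : v ≠ 0) :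
    llr (gaussianReal m v) volume
      =ᵐ[volume] fun x => log (√(2 * π * v))⁻¹ - (x - m) ^ 2 / (2 * v) := by
  filter_upwards [rnDeriv_gaussianReal m v] with x hx
  rw [llr, hx, toReal_gaussianPDF, log_gaussianPDFReal m hv]

lemma isOpenPosMeasure_gaussianReal (m : ℝ) {v : ℝ≥0} (hv : v ≠ 0) :
    (gaussianReal m v).IsOpenPosMeasure :=
  (gaussianReal_absolutelyContinuous' m hv).isOpenPosMeasure

lemma hasDerivAt_gaussianPDFReal (m : ℝ) (v : ℝ≥0) (x : ℝ) :
    HasDerivAt (gaussianPDFReal m v) (-((x - m) / v * gaussianPDFReal m v x)) x := by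
  have hexponent : HasDerivAt (fun y : ℝ => -(y - m) ^ 2 / (2 * v)) (-((x - m) / v)) x := by
    refine ((((hasDerivAt_id x).sub_const m).pow 2).neg.div_const (2 * (v : ℝ))).congr_deriv ?_
    simp only [id_eq, Nat.cast_ofNat, Nat.add_one_sub_one, pow_one, mul_one]
    rw [neg_div, mul_div_mul_left _ _ two_ne_zero]
  rw [gaussianPDFReal_def]
  exact (hexponent.exp.const_mul _).congr_deriv (by ring)

lemma tendsto_gaussianPDFReal_atTop (m : ℝ) {v : ℝ≥0} (hv : v ≠ 0) :
    Tendsto (gaussianPDFReal m v) atTop (𝓝 0) := by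
  have hexponent : Tendsto (fun x : ℝ => -(x - m) ^ 2 / (2 * v)) atTop atBot := by
    simp only [neg_div]
    exact tendsto_neg_atTop_atBot.comp (((tendsto_pow_atTop two_ne_zero).comp
      (tendsto_atTop_add_const_right _ (-m) tendsto_id)).atTop_div_const (by positivity))
  rw [gaussianPDFReal_def]
  simpa using (tendsto_exp_atBot.comp hexponent).const_mul (√(2 * π * v))⁻¹

end GaussianReal

section IntegrationByParts

variable {h : ℝ → ℝ}

lemma setLIntegral_Ioc_deriv_le_of_monotone (hh : Monotone h) {a b : ℝ} (hab : a ≤ b) :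
    ∫⁻ t in Ioc a b, ENNReal.ofReal (deriv h t) ≤ ENNReal.ofReal (h b - h a) := by
  have hm : MonotoneOn h (uIcc a b) := hh.monotoneOn _
  have hint := (intervalIntegrable_iff_integrableOn_Ioc_of_le hab).1 hm.intervalIntegrable_deriv
  have hle := hm.intervalIntegral_deriv_mem_uIcc
  rw [uIcc_of_le (sub_nonneg.2 (hh hab)), intervalIntegral.integral_of_le hab] at hle
  rw [← ofReal_integral_eq_lintegral_ofReal hint (ae_of_all _ fun _ => hh.deriv_nonneg)]
  exact ENNReal.ofReal_le_ofReal hle.2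

lemma setLIntegral_Ioi_deriv_mul_measure_Ioi_le (hh : Monotone h) (ρ : Measure ℝ) [SFinite ρ]
    (a : ℝ) :
    ∫⁻ t in Ioi a, ENNReal.ofReal (deriv h t) * ρ (Ioi t)
      ≤ ∫⁻ x in Ioi a, ENNReal.ofReal (h x - h a) ∂ρ := by
  set K : ℝ → ℝ → ℝ≥0∞ := fun t => (Ioi t).indicator fun _ => ENNReal.ofReal (deriv h t)
  have hK : Measurable (Function.uncurry K) :=
    ((measurable_deriv h).ennreal_ofReal.comp measurable_fst).indicator
      (measurableSet_lt measurable_fst measurable_snd)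
  calc ∫⁻ t in Ioi a, ENNReal.ofReal (deriv h t) * ρ (Ioi t)
      = ∫⁻ t in Ioi a, ∫⁻ x in Ioi a, K t x ∂ρ := by
        refine setLIntegral_congr_fun measurableSet_Ioi fun t (hat : a < t) => ?_
        simp only [K, lintegral_indicator_const measurableSet_Ioi]
        rw [Measure.restrict_apply measurableSet_Ioi, inter_eq_left.2 (Ioi_subset_Ioi hat.le)]
    _ = ∫⁻ x in Ioi a, (∫⁻ t in Ioi a, K t x) ∂ρ := lintegral_lintegral_swap hK.aemeasurable
    _ ≤ ∫⁻ x in Ioi a, ENNReal.ofReal (h x - h a) ∂ρ := by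
        refine setLIntegral_mono' measurableSet_Ioi fun x (hax : a < x) => ?_
        calc ∫⁻ t in Ioi a, K t x
            = ∫⁻ t in Iio x ∩ Ioi a, ENNReal.ofReal (deriv h t) := by
              rw [← setLIntegral_indicator measurableSet_Iio]
              rfl
          _ ≤ ∫⁻ t in Ioc a x, ENNReal.ofReal (deriv h t) :=
              lintegral_mono_set fun _ ht => ⟨ht.2, ht.1.le⟩
          _ ≤ ENNReal.ofReal (h x - h a) := setLIntegral_Ioc_deriv_le_of_monotone hh hax.le

variable {m : ℝ} {v : ℝ≥0}

lemma withDensity_gaussianReal_Ioi (hv : v ≠ 0) {t : ℝ} (ht : m ≤ t) :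
    (gaussianReal m v).withDensity (fun x => ENNReal.ofReal (x - m)) (Ioi t)
      = v * gaussianPDF m v t := by
  have hderiv : ∀ x ∈ Ici t, HasDerivAt (fun y => -(v * gaussianPDFReal m v y))
      ((x - m) * gaussianPDFReal m v x) x := fun x _ =>
    ((hasDerivAt_gaussianPDFReal m v x).const_mul (v : ℝ)).fun_neg.congr_deriv (by field_simp)
  have hnonneg : ∀ x ∈ Ioi t, 0 ≤ (x - m) * gaussianPDFReal m v x := fun x hx =>
    mul_nonneg (sub_nonneg.2 (ht.trans (le_of_lt hx))) (gaussianPDFReal_nonneg m v x)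
  have hlim : Tendsto (fun y => -(v * gaussianPDFReal m v y)) atTop (𝓝 0) := by
    simpa using ((tendsto_gaussianPDFReal_atTop m hv).const_mul (v : ℝ)).neg
  calc (gaussianReal m v).withDensity (fun x => ENNReal.ofReal (x - m)) (Ioi t)
      = ∫⁻ x in Ioi t, ENNReal.ofReal ((x - m) * gaussianPDFReal m v x) := by
        rw [withDensity_apply _ measurableSet_Ioi, gaussianReal_of_var_ne_zero m hv,
          setLIntegral_withDensity_eq_setLIntegral_mul _ (measurable_gaussianPDF m v)
            (by fun_prop) measurableSet_Ioi]
        refine setLIntegral_congr_fun measurableSet_Ioi fun x _ => ?_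
        rw [Pi.mul_apply, gaussianPDF, mul_comm, ENNReal.ofReal_mul' (gaussianPDFReal_nonneg m v x)]
    _ = ENNReal.ofReal (v * gaussianPDFReal m v t) := by
        rw [← ofReal_integral_eq_lintegral_ofReal
          (integrableOn_Ioi_deriv_of_nonneg' hderiv hnonneg hlim)
          (ae_restrict_of_forall_mem measurableSet_Ioi hnonneg),
          integral_Ioi_of_hasDerivAt_of_nonneg' hderiv hnonneg hlim, sub_neg_eq_add, zero_add]
    _ = v * gaussianPDF m v t := by
        rw [ENNReal.ofReal_mul v.coe_nonneg, ENNReal.ofReal_coe_nnreal, gaussianPDF]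

lemma setLIntegral_Ioi_deriv_gaussianReal_le (hh : Monotone h) (hv : v ≠ 0) :
    v * ∫⁻ x in Ioi m, ENNReal.ofReal (deriv h x) ∂(gaussianReal m v)
      ≤ ∫⁻ x in Ioi m, ENNReal.ofReal ((x - m) * (h x - h m)) ∂(gaussianReal m v) := by
  set ρ := (gaussianReal m v).withDensity fun x => ENNReal.ofReal (x - m) with hρ
  have hderiv : Measurable fun x => ENNReal.ofReal (deriv h x) :=
    (measurable_deriv h).ennreal_ofReal
  calc v * ∫⁻ x in Ioi m, ENNReal.ofReal (deriv h x) ∂(gaussianReal m v)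
      = ∫⁻ t in Ioi m, ENNReal.ofReal (deriv h t) * ρ (Ioi t) := by
        rw [gaussianReal_of_var_ne_zero m hv, setLIntegral_withDensity_eq_setLIntegral_mul _
          (measurable_gaussianPDF m v) hderiv measurableSet_Ioi,
          ← lintegral_const_mul _ ((measurable_gaussianPDF m v).mul hderiv)]
        refine setLIntegral_congr_fun measurableSet_Ioi fun t (hmt : m < t) => ?_
        simp only [Pi.mul_apply, hρ, withDensity_gaussianReal_Ioi hv hmt.le]
        ring
    _ ≤ ∫⁻ x in Ioi m, ENNReal.ofReal (h x - h m) ∂ρ :=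
        setLIntegral_Ioi_deriv_mul_measure_Ioi_le hh ρ m
    _ = ∫⁻ x in Ioi m, ENNReal.ofReal ((x - m) * (h x - h m)) ∂(gaussianReal m v) := by
        rw [hρ, setLIntegral_withDensity_eq_setLIntegral_mul _ (by fun_prop)
          (hh.measurable.sub_const _).ennreal_ofReal measurableSet_Ioi]
        refine setLIntegral_congr_fun measurableSet_Ioi fun x (hmx : m < x) => ?_
        rw [Pi.mul_apply, ENNReal.ofReal_mul (sub_nonneg.2 hmx.le)]

lemma lintegral_gaussianReal_eq_setLIntegral_Ioi_add (hv : v ≠ 0) (g : ℝ → ℝ≥0∞) :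
    ∫⁻ x, g x ∂(gaussianReal m v)
      = ∫⁻ x in Ioi m, g x ∂(gaussianReal m v)
        + ∫⁻ x in Ioi m, g (2 * m - x) ∂(gaussianReal m v) := by
  have := nullSingletonClass_gaussianReal (μ := m) hv
  have hreflect : MeasurePreserving (fun x : ℝ => 2 * m - x) (gaussianReal m v)
      (gaussianReal m v) := ⟨by fun_prop, by rw [gaussianReal_map_const_sub]; ring_nf⟩
  have hpre : (fun x : ℝ => 2 * m - x) ⁻¹' Iio m = Ioi m := by
    ext x
    simp only [mem_preimage, mem_Iio, mem_Ioi]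
    constructor <;> intro <;> linarith
  rw [← hpre, hreflect.setLIntegral_comp_preimage_emb
    (MeasurableEquiv.subLeft (2 * m)).measurableEmbedding g (Iio m), hpre,
    ← lintegral_add_compl g measurableSet_Ioi, compl_Ioi, restrict_Iio_eq_restrict_Iic]

lemma lintegral_deriv_gaussianReal_le (hh : Monotone h) (hv : v ≠ 0) :
    v * ∫⁻ x, ENNReal.ofReal (deriv h x) ∂(gaussianReal m v)
      ≤ ∫⁻ x, ENNReal.ofReal ((x - m) * (h x - h m)) ∂(gaussianReal m v) := by
  have hreflect : Monotone fun x => -h (2 * m - x) := fun a b hab =>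
    neg_le_neg (hh (sub_le_sub_left hab _))
  have hle := setLIntegral_Ioi_deriv_gaussianReal_le (m := m) hreflect hv
  simp only [deriv.fun_neg, deriv_comp_const_sub, neg_neg] at hle
  rw [lintegral_gaussianReal_eq_setLIntegral_Ioi_add hv,
    lintegral_gaussianReal_eq_setLIntegral_Ioi_add hv, mul_add]
  refine add_le_add (setLIntegral_Ioi_deriv_gaussianReal_le hh hv) (hle.trans_eq ?_)
  congr with x
  ring_nf

lemma sub_mul_sub_nonneg_of_monotone (hh : Monotone h) (a x : ℝ) :
    0 ≤ (x - a) * (h x - h a) := by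
  rcases le_total a x with hx | hx
  · exact mul_nonneg (sub_nonneg.2 hx) (sub_nonneg.2 (hh hx))
  · exact mul_nonneg_of_nonpos_of_nonpos (sub_nonpos.2 hx) (sub_nonpos.2 (hh hx))

lemma integrable_sub_mul_const_gaussianReal (c : ℝ) :
    Integrable (fun x => (x - m) * c) (gaussianReal m v) :=
  (((memLp_id_gaussianReal 1).integrable le_rfl).sub (integrable_const m)).mul_const c

lemma integral_sub_mul_sub_const_gaussianReal
    (hint : Integrable (fun x => (x - m) * h x) (gaussianReal m v)) (c : ℝ) :
    ∫ x, (x - m) * (h x - c) ∂(gaussianReal m v) = ∫ x, (x - m) * h x ∂(gaussianReal m v) := by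
  have hid : Integrable (fun x => x) (gaussianReal m v) :=
    (memLp_id_gaussianReal 1).integrable le_rfl
  simp only [mul_sub]
  rw [integral_sub hint (integrable_sub_mul_const_gaussianReal c), integral_mul_const,
    integral_sub hid (integrable_const m), integral_id_gaussianReal]
  simp

lemma integral_sub_mul_gaussianReal_nonneg (hh : Monotone h)
    (hint : Integrable (fun x => (x - m) * h x) (gaussianReal m v)) :
    0 ≤ ∫ x, (x - m) * h x ∂(gaussianReal m v) := by
  rw [← integral_sub_mul_sub_const_gaussianReal hint (h m)]
  exact integral_nonneg (sub_mul_sub_nonneg_of_monotone hh m)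

lemma lintegral_deriv_gaussianReal_le_ofReal_integral (hh : Monotone h) (hv : v ≠ 0)
    (hint : Integrable (fun x => (x - m) * h x) (gaussianReal m v)) :
    v * ∫⁻ x, ENNReal.ofReal (deriv h x) ∂(gaussianReal m v)
      ≤ ENNReal.ofReal (∫ x, (x - m) * h x ∂(gaussianReal m v)) := by
  have hdiff : Integrable (fun x => (x - m) * (h x - h m)) (gaussianReal m v) :=
    (hint.sub (integrable_sub_mul_const_gaussianReal (h m))).congr
      (ae_of_all _ fun _ => (mul_sub _ _ _).symm)
  rw [← integral_sub_mul_sub_const_gaussianReal hint (h m),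
    ofReal_integral_eq_lintegral_ofReal hdiff (ae_of_all _ (sub_mul_sub_nonneg_of_monotone hh m))]
  exact lintegral_deriv_gaussianReal_le hh hv

lemma integrable_deriv_gaussianReal_of_monotone (hh : Monotone h) (hv : v ≠ 0)
    (hint : Integrable (fun x => (x - m) * h x) (gaussianReal m v)) :
    Integrable (deriv h) (gaussianReal m v) := by
  refine ⟨(measurable_deriv h).aestronglyMeasurable, ?_⟩
  rw [hasFiniteIntegral_iff_ofReal (ae_of_all _ fun _ => hh.deriv_nonneg)]
  refine ENNReal.lt_top_of_mul_ne_top_right (ne_top_of_le_ne_top ENNReal.ofReal_ne_top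
    (lintegral_deriv_gaussianReal_le_ofReal_integral hh hv hint)) (by simpa using hv)

lemma integral_deriv_gaussianReal_le (hh : Monotone h) (hv : v ≠ 0)
    (hint : Integrable (fun x => (x - m) * h x) (gaussianReal m v)) :
    v * ∫ x, deriv h x ∂(gaussianReal m v) ≤ ∫ x, (x - m) * h x ∂(gaussianReal m v) := by
  have hle := lintegral_deriv_gaussianReal_le_ofReal_integral hh hv hint
  rwa [← ofReal_integral_eq_lintegral_ofReal (integrable_deriv_gaussianReal_of_monotone hh hv hint)
    (ae_of_all _ fun _ => hh.deriv_nonneg), ← ENNReal.ofReal_coe_nnreal,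
    ← ENNReal.ofReal_mul v.coe_nonneg,
    ENNReal.ofReal_le_ofReal_iff (integral_sub_mul_gaussianReal_nonneg hh hint)] at hle

end IntegrationByParts

/-! ### The transport inequality on the real line -/

section ExponentialMoments

variable {X : Type*} [MeasurableSpace X]

lemma mul_le_mul_log_sub_add_exp {a : ℝ} (ha : 0 ≤ a) (b : ℝ) :
    a * b ≤ a * log a - a + exp b := by
  rcases ha.eq_or_lt with rfl | ha
  · simpa using (exp_pos b).le
  have h := add_one_le_exp (b - log a)
  rw [exp_sub, exp_log ha, le_div_iff₀ ha] at h
  linarith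

lemma integrable_of_integrable_exp_of_integrable_llr {μ ν : Measure X} [SigmaFinite μ]
    [IsFiniteMeasure ν] (hac : ν ≪ μ) (hllr : Integrable (llr ν μ) ν) {g : X → ℝ}
    (hg : Measurable g) (hg_nonneg : ∀ x, 0 ≤ g x) (hexp : Integrable (fun x => exp (g x)) μ) :
    Integrable g ν := by
  have hbound := (((integrable_rnDeriv_mul_log_iff hac).2 hllr).sub
    (Measure.integrable_toReal_rnDeriv (μ := ν))).add hexp
  rw [← integrable_rnDeriv_smul_iff hac]
  refine hbound.mono' (by fun_prop) (ae_of_all _ fun x => ?_)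
  rw [smul_eq_mul, Real.norm_of_nonneg (mul_nonneg ENNReal.toReal_nonneg (hg_nonneg x))]
  exact mul_le_mul_log_sub_add_exp ENNReal.toReal_nonneg _

lemma memLp_two_of_integrable_llr_isGaussian {E : Type*} [NormedAddCommGroup E] [NormedSpace ℝ E]
    [CompleteSpace E] [SecondCountableTopology E] [MeasurableSpace E] [BorelSpace E]
    {μ ν : Measure E} [IsGaussian μ] [IsFiniteMeasure ν] (hac : ν ≪ μ)
    (hllr : Integrable (llr ν μ) ν) : MemLp id 2 ν := by
  obtain ⟨C, hC, hexp⟩ := IsGaussian.exists_integrable_exp_sq μ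
  have hsq := integrable_of_integrable_exp_of_integrable_llr hac hllr (by fun_prop)
    (fun x => by positivity) hexp
  refine (memLp_two_iff_integrable_sq_norm aestronglyMeasurable_id).2 ?_
  exact (hsq.const_mul C⁻¹).congr (ae_of_all _ fun x => inv_mul_cancel_left₀ hC.ne' _)

end ExponentialMoments

section RealTransport

variable {m : ℝ} {v : ℝ≥0} {ν : Measure ℝ} [IsProbabilityMeasure ν]

lemma sq_monotoneRearrangement_sub_le (hv : v ≠ 0) (hac : ν ≪ gaussianReal m v) :
    letI T := monotoneRearrangement (gaussianReal m v) ν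
    ∀ᵐ u ∂(gaussianReal m v), (T u - u) ^ 2 ≤
      2 * v * (llr ν (gaussianReal m v) (T u) + (deriv T u - 1))
        + 2 * ((u - m) ^ 2 - (u - m) * (T u - m)) := by
  have := isOpenPosMeasure_gaussianReal m hv
  have := nullSingletonClass_gaussianReal (μ := m) hv
  have hvol := gaussianReal_absolutelyContinuous m hv
  have hpres := measurePreserving_monotoneRearrangement (gaussianReal m v) ν
  filter_upwards [llr_sub_llr_sub_deriv_le_llr_monotoneRearrangement _ ν hvol hac,
    hvol.ae_le (llr_gaussianReal_volume m hv), hpres.quasiMeasurePreserving.ae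
      ((hac.trans hvol).ae_le (llr_gaussianReal_volume m hv))] with u hu hsource htarget
  rw [hsource, htarget] at hu
  set T := monotoneRearrangement (gaussianReal m v) ν
  have hquad : ((T u - m) ^ 2 - (u - m) ^ 2) / (2 * v)
      ≤ llr ν (gaussianReal m v) (T u) + (deriv T u - 1) := by
    rw [sub_div]
    linarith
  rw [div_le_iff₀' (by positivity)] at hquad
  linarith

lemma integral_sub_sq_gaussianReal : ∫ u, (u - m) ^ 2 ∂(gaussianReal m v) = v := by
  rw [← variance_fun_id_gaussianReal (μ := m), variance_eq_integral measurable_id'.aemeasurable,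
    integral_id_gaussianReal]

lemma integral_sq_monotoneRearrangement_sub_le (hv : v ≠ 0) (hac : ν ≪ gaussianReal m v)
    (hllr : Integrable (llr ν (gaussianReal m v)) ν)
    (hT : MemLp (monotoneRearrangement (gaussianReal m v) ν) 2 (gaussianReal m v)) :
    ∫ u, (monotoneRearrangement (gaussianReal m v) ν u - u) ^ 2 ∂(gaussianReal m v)
      ≤ 2 * v * ∫ x, llr ν (gaussianReal m v) x ∂ν := by
  have := isOpenPosMeasure_gaussianReal m hv
  have := nullSingletonClass_gaussianReal (μ := m) hv
  set γ := gaussianReal m v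
  set T := monotoneRearrangement γ ν
  have hmono : Monotone T := monotone_monotoneRearrangement γ ν
  have hpres : MeasurePreserving T γ ν := measurePreserving_monotoneRearrangement γ ν
  have hid : MemLp (fun u => u) 2 γ := memLp_id_gaussianReal 2
  have hcenter : MemLp (fun u => u - m) 2 γ := hid.sub (memLp_const m)
  have hcross : Integrable (fun u => (u - m) * T u) γ := hcenter.integrable_mul hT
  have hcross' : Integrable (fun u => (u - m) * (T u - m)) γ :=
    hcenter.integrable_mul (hT.sub (memLp_const m))
  have hllrT : Integrable (fun u => llr ν γ (T u)) γ := hpres.integrable_comp_of_integrable hllr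
  have hllrT_eq : ∫ u, llr ν γ (T u) ∂γ = ∫ x, llr ν γ x ∂ν := by
    rw [← integral_map (f := llr ν γ) hpres.measurable.aemeasurable
      (stronglyMeasurable_llr ν γ).aestronglyMeasurable, hpres.map_eq]
  have hderiv : Integrable (deriv T) γ := integrable_deriv_gaussianReal_of_monotone hmono hv hcross
  have hderiv' : Integrable (fun u => deriv T u - 1) γ := hderiv.sub (integrable_const 1)
  have hentropy : Integrable (fun u => llr ν γ (T u) + (deriv T u - 1)) γ :=
    hllrT.add hderiv'
  have hsquare : Integrable (fun u => (u - m) ^ 2 - (u - m) * (T u - m)) γ :=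
    hcenter.integrable_sq.sub hcross'
  calc ∫ u, (T u - u) ^ 2 ∂γ
      ≤ ∫ u, (2 * v * (llr ν γ (T u) + (deriv T u - 1))
          + 2 * ((u - m) ^ 2 - (u - m) * (T u - m))) ∂γ := by
        exact integral_mono_ae (hT.sub hid).integrable_sq
          ((hentropy.const_mul (2 * v)).add (hsquare.const_mul 2))
          (sq_monotoneRearrangement_sub_le hv hac)
    _ = 2 * v * (∫ x, llr ν γ x ∂ν + ∫ u, deriv T u ∂γ - 1)
          + 2 * (v - ∫ u, (u - m) * T u ∂γ) := by
        rw [integral_add (hentropy.const_mul _) (hsquare.const_mul _), integral_const_mul,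
          integral_const_mul, integral_add hllrT hderiv', hllrT_eq,
          integral_sub hderiv (integrable_const 1), integral_sub hcenter.integrable_sq hcross',
          integral_sub_sq_gaussianReal, integral_sub_mul_sub_const_gaussianReal hcross]
        simp
        ring
    _ ≤ 2 * v * ∫ x, llr ν γ x ∂ν := by
        linarith [integral_deriv_gaussianReal_le hmono hv hcross]

lemma lintegral_sq_monotoneRearrangement_sub_le_klDiv (hv : v ≠ 0) :
    ∫⁻ u, ENNReal.ofReal ((monotoneRearrangement (gaussianReal m v) ν u - u) ^ 2 / (2 * v))
      ∂(gaussianReal m v) ≤ klDiv ν (gaussianReal m v) := by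
  by_cases htop : klDiv ν (gaussianReal m v) = ∞
  · exact htop ▸ le_top
  obtain ⟨hac, hllr⟩ := klDiv_ne_top_iff.1 htop
  have := isOpenPosMeasure_gaussianReal m hv
  have := nullSingletonClass_gaussianReal (μ := m) hv
  have hT : MemLp (monotoneRearrangement (gaussianReal m v) ν) 2 (gaussianReal m v) :=
    (memLp_two_of_integrable_llr_isGaussian hac hllr).comp_measurePreserving
      (measurePreserving_monotoneRearrangement _ ν)
  have hcost : Integrable (fun u => (monotoneRearrangement (gaussianReal m v) ν u - u) ^ 2)
      (gaussianReal m v) := (hT.sub (memLp_id_gaussianReal 2)).integrable_sq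
  rw [← ofReal_integral_eq_lintegral_ofReal (hcost.div_const _)
      (ae_of_all _ fun u => by positivity), integral_div, ← ENNReal.ofReal_toReal htop,
    toReal_klDiv_of_measure_eq hac (by simp)]
  exact ENNReal.ofReal_le_ofReal ((div_le_iff₀' (by positivity)).2
    (integral_sq_monotoneRearrangement_sub_le hv hac hllr hT))

end RealTransport

/-! ### Tensorization of transport-entropy inequalities -/

section ChainRule

variable {X Y : Type*} [MeasurableSpace X] [MeasurableSpace Y]
  [MeasurableSpace.CountableOrCountablyGenerated X Y]

lemma rnDeriv_compProd_right {μ : Measure X} [IsFiniteMeasure μ] {κ η : Kernel X Y}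
    [IsFiniteKernel κ] [IsFiniteKernel η] (hac : μ ⊗ₘ κ ≪ μ ⊗ₘ η) :
    (μ ⊗ₘ κ).rnDeriv (μ ⊗ₘ η) =ᵐ[μ ⊗ₘ η] fun p => κ.rnDeriv η p.1 p.2 := by
  have hκ : η.withDensity (κ.rnDeriv η) =ᵐ[μ] κ := by
    filter_upwards [Measure.absolutelyContinuous_compProd_right_iff.1 hac] with x hx
    exact Kernel.withDensity_rnDeriv_eq hx
  have hmeas : Measurable fun p : X × Y => κ.rnDeriv η p.1 p.2 := Kernel.measurable_rnDeriv κ η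
  rw [← Measure.compProd_congr hκ, Measure.compProd_withDensity hmeas]
  exact Measure.rnDeriv_withDensity _ hmeas

lemma klDiv_compProd_right (μ : Measure X) [IsFiniteMeasure μ] (κ η : Kernel X Y)
    [IsFiniteKernel κ] [IsFiniteKernel η] :
    klDiv (μ ⊗ₘ κ) (μ ⊗ₘ η) = ∫⁻ x, klDiv (κ x) (η x) ∂μ := by
  by_cases hac : μ ⊗ₘ κ ≪ μ ⊗ₘ η
  · have hdensity : (fun p => ENNReal.ofReal (klFun ((μ ⊗ₘ κ).rnDeriv (μ ⊗ₘ η) p).toReal))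
        =ᵐ[μ ⊗ₘ η] fun p => ENNReal.ofReal (klFun (κ.rnDeriv η p.1 p.2).toReal) :=
      (rnDeriv_compProd_right hac).fun_comp fun r => ENNReal.ofReal (klFun r.toReal)
    rw [klDiv_eq_lintegral_klFun_of_ac hac, lintegral_congr_ae hdensity,
      Measure.lintegral_compProd (by fun_prop)]
    refine lintegral_congr_ae ?_
    filter_upwards [Measure.absolutelyContinuous_compProd_right_iff.1 hac] with x hx
    rw [klDiv_eq_lintegral_klFun_of_ac hx]
    exact lintegral_congr_ae (Kernel.rnDeriv_eq_rnDeriv_measure.fun_comp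
      fun r => ENNReal.ofReal (klFun r.toReal))
  · have hmeas : MeasurableSet {x | κ x ≪ η x} := Kernel.measurableSet_absolutelyContinuous κ η
    have hsingular : μ {x | κ x ≪ η x}ᶜ ≠ 0 :=
      fun h => hac (Measure.absolutelyContinuous_compProd_right_iff.2 h)
    rw [klDiv_of_not_ac hac, eq_comm, eq_top_iff]
    calc ∞ = ∫⁻ _ in {x | κ x ≪ η x}ᶜ, ∞ ∂μ := by simp [ENNReal.top_mul hsingular]
      _ = ∫⁻ x in {x | κ x ≪ η x}ᶜ, klDiv (κ x) (η x) ∂μ :=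
        setLIntegral_congr_fun hmeas.compl fun x hx => (klDiv_of_not_ac hx).symm
      _ ≤ ∫⁻ x, klDiv (κ x) (η x) ∂μ := setLIntegral_le_lintegral _ _

lemma klDiv_compProd_prod (μ γ : Measure X) [IsFiniteMeasure μ] [IsFiniteMeasure γ]
    (κ : Kernel X Y) [IsMarkovKernel κ] (η : Measure Y) [IsProbabilityMeasure η] :
    klDiv (μ ⊗ₘ κ) (γ.prod η) = klDiv μ γ + ∫⁻ x, klDiv (κ x) η ∂μ := by
  rw [← Measure.compProd_const, klDiv_compProd_eq_add, klDiv_compProd_right]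
  simp only [Kernel.const_apply]

end ChainRule

section Gluing

variable {X Y : Type*} [MeasurableSpace X] [MeasurableSpace Y] (P : Measure (X × X)) [SFinite P]
  (Q : Kernel X (Y × Y)) [IsMarkovKernel Q]

/-- The law of `((x, y), (x', y'))` where `(x, x')` has law `P` and, conditionally on `(x, x')`,
the pair `(y, y')` has law `Q x`. It couples two measures on `X × Y`, given a coupling of their
first marginals and couplings of their conditional laws. -/
noncomputable def glueCouplings : Measure ((X × Y) × (X × Y)) :=
  (P ⊗ₘ Q.comap Prod.fst measurable_fst).map fun p => ((p.1.1, p.2.1), (p.1.2, p.2.2))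

lemma lintegral_glueCouplings {f : (X × Y) × (X × Y) → ℝ≥0∞} (hf : Measurable f) :
    ∫⁻ p, f p ∂glueCouplings P Q
      = ∫⁻ x, ∫⁻ y, f ((x.1, y.1), (x.2, y.2)) ∂Q x.1 ∂P := by
  rw [glueCouplings, lintegral_map hf (by fun_prop), Measure.lintegral_compProd (by fun_prop)]
  rfl

lemma fst_glueCouplings : (glueCouplings P Q).fst = P.fst ⊗ₘ Q.fst := by
  refine Measure.ext_of_lintegral _ fun f hf => ?_
  rw [Measure.fst, lintegral_map hf measurable_fst, lintegral_glueCouplings P Q (by fun_prop),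
    Measure.lintegral_compProd hf, Measure.fst, lintegral_map (by fun_prop) measurable_fst]
  refine lintegral_congr fun x => ?_
  rw [Kernel.fst_apply, lintegral_map (by fun_prop) measurable_fst]

lemma snd_glueCouplings {η : Measure Y} [SFinite η] (hQ : ∀ x, (Q x).snd = η) :
    (glueCouplings P Q).snd = P.snd.prod η := by
  refine Measure.ext_of_lintegral _ fun f hf => ?_
  rw [Measure.snd, lintegral_map hf measurable_snd, lintegral_glueCouplings P Q (by fun_prop),
    lintegral_prod _ hf.aemeasurable, Measure.snd,
    lintegral_map hf.lintegral_prod_right' measurable_snd]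
  refine lintegral_congr fun x => ?_
  rw [← hQ x.1, Measure.snd, lintegral_map (by fun_prop) measurable_snd]

lemma lintegral_add_glueCouplings {c : X → X → ℝ≥0∞} {d : Y → Y → ℝ≥0∞}
    (hc : Measurable fun p : X × X => c p.1 p.2) (hd : Measurable fun p : Y × Y => d p.1 p.2) :
    ∫⁻ p, (c p.1.1 p.2.1 + d p.1.2 p.2.2) ∂glueCouplings P Q
      = ∫⁻ p, c p.1 p.2 ∂P + ∫⁻ x, ∫⁻ p, d p.1 p.2 ∂Q x ∂P.fst := by
  rw [lintegral_glueCouplings P Q (by fun_prop), Measure.fst,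
    lintegral_map hd.lintegral_kernel measurable_fst, ← lintegral_add_left hc]
  simp only [lintegral_add_left measurable_const, lintegral_const, measure_univ, mul_one]

end Gluing

/-- The tautological kernel, sending each probability measure to itself. -/
noncomputable def probabilityMeasureKernel (X : Type*) [MeasurableSpace X] :
    Kernel (ProbabilityMeasure X) X :=
  ⟨fun ν => ν, measurable_subtype_coe⟩

instance isMarkovKernel_probabilityMeasureKernel (X : Type*) [MeasurableSpace X] :
    IsMarkovKernel (probabilityMeasureKernel X) :=
  ⟨fun ν => ν.2⟩

/-- The transport-entropy inequality for `γ` with cost `c`: every probability measure `ν` has a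
coupling with `γ` whose cost is at most the relative entropy of `ν`. The couplings are required to
depend measurably on `ν`, that is, to form a kernel, so that the inequality tensorizes. -/
def TransportEntropyInequality {X : Type*} [MeasurableSpace X] (c : X → X → ℝ≥0∞)
    (γ : Measure X) : Prop :=
  ∃ P : Kernel (ProbabilityMeasure X) (X × X), ∀ ν : ProbabilityMeasure X,
    (P ν).fst = ν ∧ (P ν).snd = γ ∧ ∫⁻ p, c p.1 p.2 ∂P ν ≤ klDiv ν γ

namespace TransportEntropyInequality

variable {X Y : Type*} [MeasurableSpace X] [MeasurableSpace Y] {c : X → X → ℝ≥0∞}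
  {d : Y → Y → ℝ≥0∞} {γ : Measure X} {η : Measure Y}

lemma exists_kernel {A : Type*} [MeasurableSpace A] (h : TransportEntropyInequality c γ)
    (κ : Kernel A X) [IsMarkovKernel κ] :
    ∃ P : Kernel A (X × X), IsMarkovKernel P ∧ ∀ a,
      (P a).fst = κ a ∧ (P a).snd = γ ∧ ∫⁻ p, c p.1 p.2 ∂P a ≤ klDiv (κ a) γ := by
  obtain ⟨P, hP⟩ := h
  let law (a : A) : ProbabilityMeasure X := ⟨κ a, inferInstance⟩
  have hlaw : Measurable law := κ.measurable.subtype_mk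
  refine ⟨P.comap law hlaw, ⟨fun a => ⟨?_⟩⟩, fun a => hP (law a)⟩
  rw [← Measure.fst_univ, Kernel.comap_apply, (hP (law a)).1, measure_univ]

lemma zero [IsProbabilityMeasure γ] : TransportEntropyInequality (fun _ _ => 0) γ := by
  refine ⟨probabilityMeasureKernel X ×ₖ Kernel.const _ γ, fun ν => ?_⟩
  rw [Kernel.prod_apply]
  exact ⟨Measure.fst_prod, Measure.snd_prod, by simp⟩

lemma prod [MeasurableSpace.CountablyGenerated X] [StandardBorelSpace Y]
    [IsProbabilityMeasure γ] [IsProbabilityMeasure η]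
    (hc : Measurable fun p : X × X => c p.1 p.2) (hd : Measurable fun p : Y × Y => d p.1 p.2)
    (hγ : TransportEntropyInequality c γ) (hη : TransportEntropyInequality d η) :
    TransportEntropyInequality (fun p q : X × Y => c p.1 q.1 + d p.2 q.2) (γ.prod η) := by
  have : Nonempty Y := nonempty_of_isProbabilityMeasure η
  let N := probabilityMeasureKernel (X × Y)
  obtain ⟨P, _, hP⟩ := hγ.exists_kernel N.fst
  obtain ⟨Q, _, hQ⟩ := hη.exists_kernel N.condKernel
  let R := (P ⊗ₖ Q.comap (fun a => (a.1, a.2.1)) (by fun_prop)).map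
    fun p => ((p.1.1, p.2.1), (p.1.2, p.2.2))
  have hR (ν) : R ν = glueCouplings (P ν) (Q.sectR ν) := by
    rw [Kernel.map_apply _ (by fun_prop), Kernel.compProd_apply_eq_compProd_sectR]
    rfl
  have hN (ν) : N.fst ν ⊗ₘ N.condKernel.sectR ν = ν := by
    rw [← Kernel.compProd_apply_eq_compProd_sectR, N.disintegrate]
    rfl
  refine ⟨R, fun ν => ?_⟩
  rw [hR]
  refine ⟨?_, ?_, ?_⟩
  · have : (Q.sectR ν).fst = N.condKernel.sectR ν := by
      ext1 x
      rw [Kernel.fst_apply]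
      exact (hQ (ν, x)).1
    rw [fst_glueCouplings, (hP ν).1, this, hN]
  · rw [snd_glueCouplings _ _ fun x => (hQ (ν, x)).2.1, (hP ν).2.1]
  · rw [lintegral_add_glueCouplings _ _ hc hd, (hP ν).1, ← hN ν, klDiv_compProd_prod]
    gcongr with x
    · exact (hP ν).2.2
    · exact (hQ (ν, x)).2.2

lemma map_measurableEquiv [IsFiniteMeasure γ] (e : X ≃ᵐ Y)
    (h : TransportEntropyInequality (fun x x' => d (e x) (e x')) γ) :
    TransportEntropyInequality d (γ.map e) := by
  let N := probabilityMeasureKernel Y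
  have : IsMarkovKernel (N.map e.symm) := Kernel.IsMarkovKernel.map _ e.symm.measurable
  obtain ⟨P, _, hP⟩ := h.exists_kernel (N.map e.symm)
  have hN (ν) : N.map e.symm ν = (ν : Measure Y).map e.symm :=
    Kernel.map_apply _ e.symm.measurable _
  refine ⟨P.map (e.prodCongr e), fun ν => ?_⟩
  rw [Kernel.map_apply _ (e.prodCongr e).measurable]
  refine ⟨?_, ?_, ?_⟩
  · rw [← e.map_map_symm (ν := (ν : Measure Y)), ← hN, ← (hP ν).1, Measure.fst, Measure.fst,
      Measure.map_map measurable_fst (e.prodCongr e).measurable,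
      Measure.map_map e.measurable measurable_fst]
    rfl
  · rw [← (hP ν).2.1, Measure.snd, Measure.snd,
      Measure.map_map measurable_snd (e.prodCongr e).measurable,
      Measure.map_map e.measurable measurable_snd]
    rfl
  · rw [lintegral_map_equiv]
    refine (hP ν).2.2.trans ?_
    have hle := klDiv_map_le (ν : Measure Y) (γ.map e) e.symm.measurable
    rwa [e.map_symm_map, ← hN] at hle

lemma pi {n : ℕ} {X : Fin n → Type*} [∀ i, MeasurableSpace (X i)] [∀ i, StandardBorelSpace (X i)]
    {c : ∀ i, X i → X i → ℝ≥0∞} {γ : ∀ i, Measure (X i)} [∀ i, IsProbabilityMeasure (γ i)]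
    (hc : ∀ i, Measurable fun p : X i × X i => c i p.1 p.2)
    (h : ∀ i, TransportEntropyInequality (c i) (γ i)) :
    TransportEntropyInequality (fun x y => ∑ i, c i (x i) (y i)) (Measure.pi γ) := by
  induction n with
  | zero =>
    simpa using zero
  | succ n ih =>
    rw [← (measurePreserving_piFinSuccAbove γ 0).symm.map_eq]
    refine map_measurableEquiv _ ?_
    simp only [Fin.sum_univ_succ]
    exact (h 0).prod (hc 0) (by fun_prop) (ih (fun i => hc i.succ) fun i => h i.succ)

end TransportEntropyInequality

lemma transportEntropyInequality_gaussianReal (m : ℝ) {v : ℝ≥0} (hv : v ≠ 0) :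
    TransportEntropyInequality (fun x y => ENNReal.ofReal ((x - y) ^ 2 / (2 * v)))
      (gaussianReal m v) := by
  have := isOpenPosMeasure_gaussianReal m hv
  have := nullSingletonClass_gaussianReal (μ := m) hv
  set γ := gaussianReal m v
  have hT := measurable_uncurry_monotoneRearrangement γ
  refine ⟨(Kernel.id ×ₖ Kernel.const _ γ).map
    fun p => (monotoneRearrangement γ p.1 p.2, p.2), fun ν => ?_⟩
  have hTν : MeasurePreserving (monotoneRearrangement γ ν) γ ν :=
    measurePreserving_monotoneRearrangement γ ν
  have hgraph : (Kernel.id ×ₖ Kernel.const (ProbabilityMeasure ℝ) γ).map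
      (fun p => (monotoneRearrangement γ p.1 p.2, p.2)) ν
        = γ.map fun u => (monotoneRearrangement γ ν u, u) := by
    rw [Kernel.map_apply _ (hT.prodMk measurable_snd), Kernel.prod_apply, Kernel.id_apply,
      Kernel.const_apply, Measure.dirac_prod,
      Measure.map_map (hT.prodMk measurable_snd) (by fun_prop)]
    rfl
  rw [hgraph]
  refine ⟨?_, ?_, ?_⟩
  · rw [Measure.fst_map_prodMk measurable_id', hTν.map_eq]
  · rw [Measure.snd_map_prodMk hTν.measurable, Measure.map_id']
  · rw [lintegral_map (by fun_prop) (hTν.measurable.prodMk measurable_id')]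
    exact lintegral_sq_monotoneRearrangement_sub_le_klDiv hv

/-! ### The standard Gaussian measure -/

section StdGaussian

variable (E : Type*) [NormedAddCommGroup E] [InnerProductSpace ℝ E] [FiniteDimensional ℝ E]
  [MeasurableSpace E] [BorelSpace E]

lemma transportEntropyInequality_stdGaussian :
    TransportEntropyInequality (fun x y => ENNReal.ofReal (‖x - y‖ ^ 2 / 2)) (stdGaussian E) := by
  let b := stdOrthonormalBasis ℝ E
  let e : (Fin (Module.finrank ℝ E) → ℝ) ≃ᵐ E :=
    (MeasurableEquiv.toLp 2 _).trans b.repr.symm.toMeasurableEquiv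
  have he : (Measure.pi fun _ => gaussianReal 0 1).map e = stdGaussian E := by
    rw [← stdGaussian_map b.repr.symm, ← map_pi_eq_stdGaussian,
      Measure.map_map b.repr.symm.continuous.measurable (by fun_prop)]
    rfl
  have hnorm (x y) : ‖e x - e y‖ ^ 2 = ∑ i, (x i - y i) ^ 2 := by
    have hsub : e x - e y = b.repr.symm (WithLp.toLp 2 (x - y)) := (map_sub b.repr.symm _ _).symm
    rw [hsub, LinearIsometryEquiv.norm_map, EuclideanSpace.real_norm_sq_eq]
    rfl
  rw [← he]
  refine TransportEntropyInequality.map_measurableEquiv e ?_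
  convert TransportEntropyInequality.pi (fun _ => by fun_prop)
    fun _ => transportEntropyInequality_gaussianReal 0 one_ne_zero with x y
  rw [← ENNReal.ofReal_sum_of_nonneg fun i _ => by positivity, hnorm, Finset.sum_div]
  simp

variable {E} in
lemma integrable_exp_neg_sq_norm_div_two : Integrable fun x : E => exp (-‖x‖ ^ 2 / 2) := by
  have hcexp := GaussianFourier.integrable_cexp_neg_mul_sq_norm_add (V := E) (b := 1 / 2)
    (by norm_num) 0 0
  refine hcexp.re.congr (ae_of_all _ fun x => ?_)
  simp only [zero_mul, add_zero]
  rw [show -(1 / 2 : ℂ) * ‖x‖ ^ 2 = ((-‖x‖ ^ 2 / 2 : ℝ) : ℂ) by push_cast; ring]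
  exact Complex.exp_ofReal_re _

lemma stdGaussian_eq_withDensity : stdGaussian E = volume.withDensity fun x =>
    ENNReal.ofReal ((2 * π) ^ (-(Module.finrank ℝ E : ℝ) / 2) * exp (-‖x‖ ^ 2 / 2)) := by
  have := isFiniteMeasure_withDensity_ofReal (μ := (volume : Measure E))
    (integrable_exp_neg_sq_norm_div_two.const_mul ((2 * π) ^ (-(Module.finrank ℝ E : ℝ) / 2))).2
  refine Measure.ext_of_charFun (funext fun t => ?_)
  rw [charFun_stdGaussian, charFun_apply, integral_withDensity_eq_integral_toReal_smul
    (by fun_prop) (ae_of_all _ fun x => ENNReal.ofReal_lt_top)]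
  have hfourier := GaussianFourier.integral_cexp_neg_mul_sq_norm_add (V := E) (b := 1 / 2)
    (by norm_num) Complex.I t
  have hdensity (x : E) : (ENNReal.ofReal
      ((2 * π) ^ (-(Module.finrank ℝ E : ℝ) / 2) * exp (-‖x‖ ^ 2 / 2))).toReal
        • Complex.exp (inner ℝ x t * Complex.I)
      = ((2 * π) ^ (-(Module.finrank ℝ E : ℝ) / 2) : ℝ)
        * Complex.exp (-(1 / 2) * ‖x‖ ^ 2 + Complex.I * inner ℝ t x) := by
    rw [ENNReal.toReal_ofReal (by positivity), Complex.real_smul, Complex.ofReal_mul,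
      Complex.ofReal_exp, mul_assoc, ← Complex.exp_add, real_inner_comm]
    push_cast
    ring_nf
  have hbase : (π / (1 / 2) : ℂ) ^ (Module.finrank ℝ E / 2 : ℂ)
      = ((2 * π) ^ (Module.finrank ℝ E / 2 : ℝ) : ℝ) := by
    rw [Complex.ofReal_cpow (by positivity)]
    push_cast
    ring_nf
  simp only [hdensity]
  rw [integral_const_mul, hfourier, hbase, ← mul_assoc, ← Complex.ofReal_mul,
    ← rpow_add (by positivity), ← add_div, neg_add_cancel, zero_div, rpow_zero,
    Complex.ofReal_one, one_mul, Complex.I_sq]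
  ring_nf

end StdGaussian

lemma gaussian_eq_stdGaussian (n : ℕ) : gaussian n = stdGaussian (EuclideanSpace ℝ (Fin n)) := by
  rw [stdGaussian_eq_withDensity, finrank_euclideanSpace_fin, gaussian]

section Density

variable {X : Type*} [MeasurableSpace X] {γ : Measure X} {f : X → ℝ}

lemma isProbabilityMeasure_withDensity_ofReal (hf : 0 ≤ᵐ[γ] f) (hmass : ∫ x, f x ∂γ = 1) :
    IsProbabilityMeasure (γ.withDensity fun x => ENNReal.ofReal (f x)) := by
  have hint : Integrable f γ := .of_integral_ne_zero (by simp [hmass])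
  exact ⟨by rw [withDensity_apply _ .univ, setLIntegral_univ,
    ← ofReal_integral_eq_lintegral_ofReal hint hf, hmass, ENNReal.ofReal_one]⟩

lemma rnDeriv_withDensity_ofReal_mul_log [SigmaFinite γ] (hf : 0 ≤ᵐ[γ] f)
    (hmeas : AEMeasurable f γ) :
    letI ν := γ.withDensity fun x => ENNReal.ofReal (f x)
    (fun x => (ν.rnDeriv γ x).toReal * log (ν.rnDeriv γ x).toReal)
      =ᵐ[γ] fun x => f x * log (f x) := by
  filter_upwards [Measure.rnDeriv_withDensity₀ γ hmeas.ennreal_ofReal, hf] with x hx hfx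
  rw [hx, ENNReal.toReal_ofReal hfx]

variable [IsProbabilityMeasure γ]

lemma klDiv_withDensity_ofReal_ne_top (hf : 0 ≤ᵐ[γ] f) (hmass : ∫ x, f x ∂γ = 1)
    (hent : Integrable (fun x => f x * log (f x)) γ) :
    klDiv (γ.withDensity fun x => ENNReal.ofReal (f x)) γ ≠ ∞ := by
  have hint : Integrable f γ := .of_integral_ne_zero (by simp [hmass])
  have := isProbabilityMeasure_withDensity_ofReal hf hmass
  have hac := withDensity_absolutelyContinuous γ fun x => ENNReal.ofReal (f x)
  exact klDiv_ne_top hac ((integrable_rnDeriv_mul_log_iff hac).1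
    (hent.congr (rnDeriv_withDensity_ofReal_mul_log hf hint.aemeasurable).symm))

lemma toReal_klDiv_withDensity_ofReal (hf : 0 ≤ᵐ[γ] f) (hmass : ∫ x, f x ∂γ = 1) :
    (klDiv (γ.withDensity fun x => ENNReal.ofReal (f x)) γ).toReal = ∫ x, f x * log (f x) ∂γ := by
  have hint : Integrable f γ := .of_integral_ne_zero (by simp [hmass])
  have := isProbabilityMeasure_withDensity_ofReal hf hmass
  have hac := withDensity_absolutelyContinuous γ fun x => ENNReal.ofReal (f x)
  rw [toReal_klDiv_of_measure_eq hac (by simp), ← integral_rnDeriv_mul_log hac,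
    integral_congr_ae (rnDeriv_withDensity_ofReal_mul_log hf hint.aemeasurable)]

end Density

section Wasserstein

variable {n : ℕ}

lemma W2sq_le_integral {μ ν : Measure (EuclideanSpace ℝ (Fin n))}
    {P : Measure (EuclideanSpace ℝ (Fin n) × EuclideanSpace ℝ (Fin n))} (hP : IsCoupling P μ ν) :
    W2sq μ ν ≤ ∫ p, ‖p.1 - p.2‖ ^ 2 ∂P := by
  refine csInf_le ⟨0, ?_⟩ ⟨P, hP, rfl⟩
  rintro _ ⟨Q, -, rfl⟩
  positivity

lemma W2sq_gaussian_le_two_mul_toReal_klDiv {ν : Measure (EuclideanSpace ℝ (Fin n))}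
    [IsProbabilityMeasure ν] (htop : klDiv ν (gaussian n) ≠ ∞) :
    W2sq ν (gaussian n) ≤ 2 * (klDiv ν (gaussian n)).toReal := by
  rw [gaussian_eq_stdGaussian] at htop ⊢
  obtain ⟨P, hP⟩ := transportEntropyInequality_stdGaussian (EuclideanSpace ℝ (Fin n))
  let ν' : ProbabilityMeasure (EuclideanSpace ℝ (Fin n)) := ⟨ν, inferInstance⟩
  obtain ⟨hfst, hsnd, hcost⟩ := hP ν'
  calc W2sq ν (stdGaussian _)
      ≤ ∫ p, ‖p.1 - p.2‖ ^ 2 ∂P ν' := W2sq_le_integral ⟨hfst, hsnd⟩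
    _ = 2 * ∫ p, ‖p.1 - p.2‖ ^ 2 / 2 ∂P ν' := by
        rw [integral_div]
        ring
    _ = 2 * (∫⁻ p, ENNReal.ofReal (‖p.1 - p.2‖ ^ 2 / 2) ∂P ν').toReal := by
        rw [integral_eq_lintegral_of_nonneg_ae (ae_of_all _ fun p => by positivity) (by fun_prop)]
    _ ≤ 2 * (klDiv ν (stdGaussian _)).toReal := by
        gcongr
        exact hcost

end Wasserstein

theorem talagrand_gaussian (n : ℕ) (f : EuclideanSpace ℝ (Fin n) → ℝ)
    (hpos : ∀ x, 0 ≤ f x) (hmass : ∫ x, f x ∂(gaussian n) = 1)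
    (hint : Integrable (fun x => f x * Real.log (f x)) (gaussian n)) :
    Real.sqrt (W2sq ((gaussian n).withDensity (fun x => ENNReal.ofReal (f x))) (gaussian n))
      ≤ Real.sqrt (2 * ∫ x, f x * Real.log (f x) ∂(gaussian n)) := by
  have hf : 0 ≤ᵐ[gaussian n] f := ae_of_all _ hpos
  have : IsProbabilityMeasure (gaussian n) := by
    rw [gaussian_eq_stdGaussian]
    infer_instance
  have := isProbabilityMeasure_withDensity_ofReal hf hmass
  rw [← toReal_klDiv_withDensity_ofReal hf hmass]
  exact sqrt_le_sqrt (W2sq_gaussian_le_two_mul_toReal_klDiv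
    (klDiv_withDensity_ofReal_ne_top hf hmass hint))
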